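/- Let z₀, w₀ ∈ 𝔻 with |w₀| < |z₀|, set γ₀ := w₀/z₀, and let γ₁, γ₂ ∈ 𝔻. Then there exists c ∈ ℂ such that the set {h'''(z₀) : h ∈ ℋ, h(0) = 0, and the function f(z) := h(z)/z (extended analytically to 𝔻) satisfies f(z₀) = γ₀, H¹f(z₀) = γ₁, H²f(z₀) = γ₂} is exactly the closed disk centered at c with radius |z₀|·6(1 − |γ₀|²)(1 − |γ₁|²)(1 − |γ₂|²)/(1 − |z₀|²)³. -/

import Mathlib

open Complex Metric

/-- `ℋ`: analytic self-maps of the open unit disk. -/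
def Hclass (f : ℂ → ℂ) : Prop :=
  DifferentiableOn ℂ f (ball (0 : ℂ) 1) ∧ Set.MapsTo f (ball (0 : ℂ) 1) (ball (0 : ℂ) 1)

/-- The (first-order) hyperbolic derivative `H¹f(z) = (1-|z|²)f'(z)/(1-|f(z)|²)`. -/
noncomputable def H1 (f : ℂ → ℂ) (z : ℂ) : ℂ :=
  ((1 - ‖z‖ ^ 2 : ℝ) : ℂ) * deriv f z / ((1 - ‖f z‖ ^ 2 : ℝ) : ℂ)

/-- The second Peschl invariant derivative `D₂f(z)`. -/
noncomputable def D2 (f : ℂ → ℂ) (z : ℂ) : ℂ :=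
  ((1 - ‖z‖ ^ 2 : ℝ) : ℂ) ^ 2 / ((1 - ‖f z‖ ^ 2 : ℝ) : ℂ) *
    (iteratedDeriv 2 f z - 2 * (starRingEnd ℂ) z * deriv f z / ((1 - ‖z‖ ^ 2 : ℝ) : ℂ) +
      2 * (starRingEnd ℂ) (f z) * (deriv f z) ^ 2 / ((1 - ‖f z‖ ^ 2 : ℝ) : ℂ))

/-- The second-order hyperbolic derivative `H²f(z) = D₂f(z)/(2(1-|H¹f(z)|²))`. -/
noncomputable def H2 (f : ℂ → ℂ) (z : ℂ) : ℂ :=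
  D2 f z / (2 * ((1 - ‖H1 f z‖ ^ 2 : ℝ) : ℂ))

/-!
Write `φ_a(z) = (z - a) / (1 - ā z)`. By the Schwarz–Pick lemma a disk map `f` factors as
`φ_{f z₀} ∘ f = φ_{z₀} · g` with `g` in the Schur class, and conversely every Schur function `g`
and every value `f z₀` in the disk arise from a unique `f` (the Schur algorithm). Differentiating
this factorization at `z₀` gives `H¹f(z₀) = g(z₀)` and `H²f(z₀) = H¹g(z₀)`, and expresses
`f⁽ⁿ⁺¹⁾(z₀)` as `(n + 1) (1 - |f z₀|²) / (1 - |z₀|²) · g⁽ⁿ⁾(z₀)` plus terms of lower order in `g`.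
Applying the factorization three times, `f ↦ g ↦ k ↦ l`, the data `γ₀, γ₁, γ₂` fix
`f(z₀), g(z₀), k(z₀)`, while `l(z₀)` ranges freely over the closed unit disk; since `f'''(z₀)` is
an affine function of `l(z₀)`, it ranges over a closed disk. Finally `h = z f` gives
`h'''(z₀) = z₀ f'''(z₀) + 3 f''(z₀)`, where `f''(z₀)` is already fixed by the data.
-/

open scoped ComplexConjugate Topology

section Calculus

variable {𝕜 : Type*} [NontriviallyNormedField 𝕜]

lemma iteratedDeriv_sub_const {F : Type*} [NormedAddCommGroup F] [NormedSpace 𝕜 F] {n : ℕ}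
    (hn : 0 < n) (f : 𝕜 → F) (c : F) (x : 𝕜) :
    iteratedDeriv n (fun z => f z - c) x = iteratedDeriv n f x := by
  simp only [sub_eq_neg_add, iteratedDeriv_const_add hn]

lemma iteratedDeriv_add_two_affine (a b x : 𝕜) (n : ℕ) :
    iteratedDeriv (n + 2) (fun z => a + b * z) x = 0 := by
  rw [iteratedDeriv_const_add (by lia), iteratedDeriv_const_mul_field, iteratedDeriv_fun_id]
  simp

lemma iteratedDeriv_succ_affine_mul (a b : 𝕜) {f : 𝕜 → 𝕜} {x : 𝕜} {n : ℕ}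
    (hf : ContDiffAt 𝕜 (n + 1 : ℕ) f x) :
    iteratedDeriv (n + 1) (fun z => (a + b * z) * f z) x =
      (n + 1) * (b * iteratedDeriv n f x) + (a + b * x) * iteratedDeriv (n + 1) f x := by
  rw [iteratedDeriv_fun_mul (by fun_prop) hf, Finset.sum_range_succ', Finset.sum_range_succ']
  simp [iteratedDeriv_add_two_affine, mul_assoc]

lemma iteratedDeriv_two_fun_mul {f g : 𝕜 → 𝕜} {x : 𝕜}
    (hf : ContDiffAt 𝕜 2 f x) (hg : ContDiffAt 𝕜 2 g x) :
    iteratedDeriv 2 (fun z => f z * g z) x =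
      f x * iteratedDeriv 2 g x + 2 * deriv f x * deriv g x + iteratedDeriv 2 f x * g x := by
  rw [iteratedDeriv_fun_mul hf hg]
  simp [Finset.sum_range_succ]

end Calculus

open scoped Pointwise in
lemma image_mul_add_closedBall {F : Type*} [NormedField F] {m : F} (hm : m ≠ 0) (b x : F) (r : ℝ) :
    (fun w => m * w + b) '' closedBall x r = closedBall (m * x + b) (‖m‖ * r) := by
  have himage : (fun w => m * w + b) '' closedBall x r = (· + b) '' (m • closedBall x r) := by
    rw [← Set.image_smul, Set.image_image]
    rfl
  rw [himage, smul_closedBall' hm, Set.image_add_right]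
  ext w
  simp [dist_eq_norm, add_comm, sub_eq_add_neg]

/-- The disk automorphism `φ_a(z) = (z - a) / (1 - ā z)`, which sends `a` to `0`. -/
noncomputable def blaschke (a z : ℂ) : ℂ := (z - a) / (1 - conj a * z)

section Blaschke

variable {a z : ℂ}

lemma one_sub_conj_mul_ne_zero (ha : ‖a‖ < 1) (hz : ‖z‖ < 1) : 1 - conj a * z ≠ 0 := by
  refine sub_ne_zero.2 fun h => ?_
  have hnorm : ‖a‖ * ‖z‖ = 1 := by simpa using (congrArg norm h).symm
  exact (mul_lt_one_of_nonneg_of_lt_one_left (norm_nonneg a) ha hz.le).ne hnorm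

lemma one_sub_norm_sq_pos (hz : ‖z‖ < 1) : 0 < 1 - ‖z‖ ^ 2 :=
  sub_pos.2 (pow_lt_one₀ (norm_nonneg z) hz two_ne_zero)

lemma one_sub_ofReal_norm_sq_ne_zero (hz : ‖z‖ < 1) : (1 - ‖z‖ ^ 2 : ℂ) ≠ 0 := by
  exact_mod_cast (one_sub_norm_sq_pos hz).ne'

@[simp]
lemma blaschke_self (a : ℂ) : blaschke a a = 0 := by simp [blaschke]

@[simp]
lemma blaschke_neg_zero (a : ℂ) : blaschke (-a) 0 = a := by simp [blaschke]

lemma norm_blaschke_lt_one (ha : ‖a‖ < 1) (hz : ‖z‖ < 1) : ‖blaschke a z‖ < 1 := by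
  have hdiff : ‖1 - conj a * z‖ ^ 2 - ‖z - a‖ ^ 2 = (1 - ‖a‖ ^ 2) * (1 - ‖z‖ ^ 2) := by
    simp only [← normSq_eq_norm_sq, normSq_apply, sub_re, sub_im, one_re, one_im, mul_re, mul_im,
      conj_re, conj_im]
    ring
  have hpos := mul_pos (one_sub_norm_sq_pos ha) (one_sub_norm_sq_pos hz)
  rw [blaschke, norm_div, div_lt_one (norm_pos_iff.2 (one_sub_conj_mul_ne_zero ha hz))]
  exact lt_of_pow_lt_pow_left₀ 2 (norm_nonneg _) (by linarith)

lemma hclass_blaschke (ha : ‖a‖ < 1) : Hclass (blaschke a) := by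
  refine ⟨DifferentiableOn.div (by fun_prop) (by fun_prop) fun z hz => ?_, fun z hz => ?_⟩
  · exact one_sub_conj_mul_ne_zero ha (mem_ball_zero_iff.1 hz)
  · exact mem_ball_zero_iff.2 (norm_blaschke_lt_one ha (mem_ball_zero_iff.1 hz))

lemma blaschke_blaschke_neg (ha : ‖a‖ < 1) (hz : ‖z‖ < 1) : blaschke a (blaschke (-a) z) = z := by
  have hnum : 1 + conj a * z ≠ 0 := by
    simpa using one_sub_conj_mul_ne_zero (a := -a) (by simpa using ha) hz
  have hself := one_sub_conj_mul_ne_zero ha ha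
  simp only [blaschke, map_neg, neg_mul, sub_neg_eq_add]
  have hsub : (z + a) / (1 + conj a * z) - a = z * (1 - conj a * a) / (1 + conj a * z) := by
    rw [div_sub' hnum]
    ring
  have hone_sub : 1 - conj a * ((z + a) / (1 + conj a * z)) =
      (1 - conj a * a) / (1 + conj a * z) := by
    rw [mul_div_assoc', one_sub_div hnum]
    ring
  rw [hsub, hone_sub, div_div_div_cancel_right₀ hnum, mul_div_cancel_right₀ _ hself]

lemma blaschke_neg_blaschke (ha : ‖a‖ < 1) (hz : ‖z‖ < 1) : blaschke (-a) (blaschke a z) = z := by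
  simpa using blaschke_blaschke_neg (a := -a) (by simpa using ha) hz

end Blaschke

/-- The Schur class: analytic maps of the open unit disk into the closed unit disk. -/
def SchurClass (g : ℂ → ℂ) : Prop :=
  DifferentiableOn ℂ g (ball (0 : ℂ) 1) ∧ Set.MapsTo g (ball (0 : ℂ) 1) (closedBall (0 : ℂ) 1)

lemma Hclass.comp {f g : ℂ → ℂ} (hf : Hclass f) (hg : Hclass g) : Hclass (f ∘ g) :=
  ⟨hf.1.comp hg.1 hg.2, hf.2.comp hg.2⟩

lemma Hclass.schurClass {f : ℂ → ℂ} (hf : Hclass f) : SchurClass f :=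
  ⟨hf.1, hf.2.mono_right ball_subset_closedBall⟩

lemma Hclass.mul_schurClass {f g : ℂ → ℂ} (hf : Hclass f) (hg : SchurClass g) :
    Hclass fun z => f z * g z := by
  refine ⟨hf.1.mul hg.1, fun z hz => ?_⟩
  have hfz : ‖f z‖ < 1 := mem_ball_zero_iff.1 (hf.2 hz)
  have hgz : ‖g z‖ ≤ 1 := mem_closedBall_zero_iff.1 (hg.2 hz)
  rw [mem_ball_zero_iff, norm_mul]
  exact mul_lt_one_of_nonneg_of_lt_one_left (norm_nonneg _) hfz hgz

lemma hclass_id : Hclass fun z => z :=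
  ⟨differentiableOn_id, Set.mapsTo_id _⟩

lemma schurClass_const {t : ℂ} (ht : ‖t‖ ≤ 1) : SchurClass fun _ => t :=
  ⟨differentiableOn_const t, fun _ _ => mem_closedBall_zero_iff.2 ht⟩

lemma SchurClass.hclass_of_norm_lt_one {g : ℂ → ℂ} {z₀ : ℂ} (hg : SchurClass g)
    (hz₀ : z₀ ∈ ball (0 : ℂ) 1) (hlt : ‖g z₀‖ < 1) : Hclass g := by
  refine ⟨hg.1, fun z hz => mem_ball_zero_iff.2 ?_⟩
  have hle : ∀ w ∈ ball (0 : ℂ) 1, ‖g w‖ ≤ 1 := fun w hw => mem_closedBall_zero_iff.1 (hg.2 hw)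
  by_contra! hge
  have hconst := eqOn_of_isPreconnected_of_isMaxOn_norm (convex_ball (0 : ℂ) 1).isPreconnected
    isOpen_ball hg.1 hz (fun w hw => (hle w hw).trans hge) hz₀
  have heq : g z₀ = g z := hconst
  exact absurd (heq ▸ hlt) hge.not_gt

lemma SchurClass.dslope_zero {h : ℂ → ℂ} (hh : SchurClass h) (h_zero : h 0 = 0) :
    SchurClass (dslope h 0) := by
  refine ⟨(differentiableOn_dslope (ball_mem_nhds 0 one_pos)).2 hh.1, fun z hz => ?_⟩
  have hmaps : Set.MapsTo h (ball 0 1) (closedBall (h 0) 1) := by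
    rw [h_zero]
    exact hh.2
  simpa using norm_dslope_le_div_of_mapsTo_ball hh.1 hmaps hz

lemma eqOn_dslope_zero_of_eq_div {f h : ℂ → ℂ} {r : ℝ} (hf : DifferentiableOn ℂ f (ball 0 r))
    (hh : DifferentiableOn ℂ h (ball 0 r)) (h_zero : h 0 = 0)
    (hfh : ∀ z ∈ ball (0 : ℂ) r, z ≠ 0 → f z = h z / z) : Set.EqOn f (dslope h 0) (ball 0 r) := by
  have hne : ∀ z ∈ ball (0 : ℂ) r, z ≠ 0 → f z = dslope h 0 z := fun z hz hz0 => by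
    rw [hfh z hz hz0, dslope_of_ne _ hz0, slope_def_field, h_zero, sub_zero, sub_zero]
  intro z hz
  rcases eq_or_ne z 0 with rfl | hz0
  · have hnhds : ball (0 : ℂ) r ∈ 𝓝 0 := isOpen_ball.mem_nhds hz
    have hpunctured : f =ᶠ[𝓝[≠] 0] dslope h 0 := by
      filter_upwards [nhdsWithin_le_nhds hnhds, self_mem_nhdsWithin] with z using hne z
    have hdslope := ((differentiableOn_dslope hnhds).2 hh).differentiableAt hnhds
    exact (((hf.differentiableAt hnhds).continuousAt.eventuallyEq_nhds_iff_eventuallyEq_nhdsNE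
      hdslope.continuousAt).1 hpunctured).eq_of_nhds
  · exact hne z hz hz0

lemma SchurClass.hclass_of_eq_div {f h : ℂ → ℂ} {z₀ : ℂ} (hh : SchurClass h) (h_zero : h 0 = 0)
    (hf : DifferentiableOn ℂ f (ball 0 1)) (hfh : ∀ z ∈ ball (0 : ℂ) 1, z ≠ 0 → f z = h z / z)
    (hz₀ : z₀ ∈ ball (0 : ℂ) 1) (hlt : ‖f z₀‖ < 1) : Hclass f := by
  have heq : Set.EqOn f (dslope h 0) (ball 0 1) := eqOn_dslope_zero_of_eq_div hf hh.1 h_zero hfh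
  have hf_schur : SchurClass f := ⟨hf, (hh.dslope_zero h_zero).2.congr heq.symm⟩
  exact hf_schur.hclass_of_norm_lt_one hz₀ hlt

lemma eqOn_id_mul_of_eq_div {𝕜 : Type*} [Field 𝕜] {f h : 𝕜 → 𝕜} {s : Set 𝕜} (h_zero : h 0 = 0)
    (hfh : ∀ z ∈ s, z ≠ 0 → f z = h z / z) : Set.EqOn h (fun z => z * f z) s := by
  intro z hz
  rcases eq_or_ne z 0 with rfl | hz0
  · simp [h_zero]
  · simp [hfh z hz hz0, mul_div_cancel₀ _ hz0]

/-- `g` is a hyperbolic difference quotient of `f` with base point `z₀`: on the disk,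
`φ_{f z₀}(f z) = φ_{z₀}(z) · g z`. For `z ≠ z₀` this determines `g z`; stating it as a relation
avoids a separate definition of the quotient at `z₀`. -/
def IsHypQuotient (z₀ : ℂ) (f g : ℂ → ℂ) : Prop :=
  ∀ z ∈ ball (0 : ℂ) 1, blaschke (f z₀) (f z) = blaschke z₀ z * g z

section HypQuotient

variable {z₀ : ℂ} {f g : ℂ → ℂ}

lemma Hclass.exists_isHypQuotient (hf : Hclass f) (hz₀ : z₀ ∈ ball (0 : ℂ) 1) :
    ∃ g, SchurClass g ∧ IsHypQuotient z₀ f g := by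
  have hz₀' : ‖z₀‖ < 1 := mem_ball_zero_iff.1 hz₀
  have hfz₀ : ‖f z₀‖ < 1 := mem_ball_zero_iff.1 (hf.2 hz₀)
  set F : ℂ → ℂ := blaschke (f z₀) ∘ f ∘ blaschke (-z₀) with hF
  have F_hclass : Hclass F :=
    (hclass_blaschke hfz₀).comp (hf.comp (hclass_blaschke (by simpa using hz₀')))
  have F_zero : F 0 = 0 := by simp [hF]
  have hdslope := F_hclass.schurClass.dslope_zero F_zero
  have hφ := hclass_blaschke hz₀'
  refine ⟨dslope F 0 ∘ blaschke z₀, ⟨hdslope.1.comp hφ.1 hφ.2, hdslope.2.comp hφ.2⟩,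
    fun z hz => ?_⟩
  have hslope := sub_smul_dslope F 0 (blaschke z₀ z)
  rw [F_zero, sub_zero, sub_zero, smul_eq_mul] at hslope
  rw [Function.comp_apply, hslope]
  simp only [hF, Function.comp_apply, blaschke_neg_blaschke hz₀' (mem_ball_zero_iff.1 hz)]

lemma SchurClass.exists_hclass_isHypQuotient {a : ℂ} (hg : SchurClass g)
    (hz₀ : z₀ ∈ ball (0 : ℂ) 1) (ha : ‖a‖ < 1) :
    ∃ f, Hclass f ∧ f z₀ = a ∧ IsHypQuotient z₀ f g := by
  have hprod : Hclass fun z => blaschke z₀ z * g z :=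
    (hclass_blaschke (mem_ball_zero_iff.1 hz₀)).mul_schurClass hg
  have hvalue : blaschke (-a) (blaschke z₀ z₀ * g z₀) = a := by simp
  refine ⟨fun z => blaschke (-a) (blaschke z₀ z * g z),
    (hclass_blaschke (by simpa using ha)).comp hprod, hvalue, fun z hz => ?_⟩
  simp only [hvalue]
  exact blaschke_blaschke_neg ha (mem_ball_zero_iff.1 (hprod.2 hz))

lemma IsHypQuotient.mul_eq_mul (h : IsHypQuotient z₀ f g) (hf : Hclass f)
    (hz₀ : z₀ ∈ ball (0 : ℂ) 1) {z : ℂ} (hz : z ∈ ball (0 : ℂ) 1) :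
    (1 + -conj z₀ * z) * (f z - f z₀) = (-z₀ + 1 * z) * (g z * (1 - conj (f z₀) * f z)) := by
  have hz_ne := one_sub_conj_mul_ne_zero (mem_ball_zero_iff.1 hz₀) (mem_ball_zero_iff.1 hz)
  have hfz_ne := one_sub_conj_mul_ne_zero (mem_ball_zero_iff.1 (hf.2 hz₀))
    (mem_ball_zero_iff.1 (hf.2 hz))
  have hz_eq := h z hz
  rw [blaschke, blaschke, div_mul_eq_mul_div, div_eq_div_iff hfz_ne hz_ne] at hz_eq
  linear_combination hz_eq

/-- Leibniz's rule at `z₀` for the identity `IsHypQuotient.mul_eq_mul`: since `z - z₀` vanishes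
at `z₀`, only derivatives of `g` of order at most `n` survive. -/
lemma IsHypQuotient.one_sub_norm_sq_mul_iteratedDeriv_succ (h : IsHypQuotient z₀ f g)
    (hf : Hclass f) (hg : DifferentiableOn ℂ g (ball 0 1)) (hz₀ : z₀ ∈ ball (0 : ℂ) 1) (n : ℕ) :
    (1 - ‖z₀‖ ^ 2) * iteratedDeriv (n + 1) f z₀ =
      (n + 1) * (iteratedDeriv n (fun z => g z * (1 - conj (f z₀) * f z)) z₀ +
        conj z₀ * iteratedDeriv n (fun z => f z - f z₀) z₀) := by
  have hball : ball (0 : ℂ) 1 ∈ 𝓝 z₀ := isOpen_ball.mem_nhds hz₀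
  have hfn : ContDiffAt ℂ (n + 1 : ℕ) f z₀ := (hf.1.analyticAt hball).contDiffAt
  have hgn : ContDiffAt ℂ (n + 1 : ℕ) g z₀ := (hg.analyticAt hball).contDiffAt
  have heq : (fun z => (1 + -conj z₀ * z) * (f z - f z₀)) =ᶠ[𝓝 z₀]
      fun z => (-z₀ + 1 * z) * (g z * (1 - conj (f z₀) * f z)) :=
    Filter.eventually_of_mem hball fun z hz => h.mul_eq_mul hf hz₀ hz
  have hderiv := heq.iteratedDeriv_eq (n + 1)
  rw [iteratedDeriv_succ_affine_mul _ _ (by fun_prop),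
    iteratedDeriv_succ_affine_mul _ _ (by fun_prop), iteratedDeriv_sub_const n.succ_pos] at hderiv
  rw [← conj_mul']
  linear_combination hderiv

lemma IsHypQuotient.deriv_eq (h : IsHypQuotient z₀ f g) (hf : Hclass f)
    (hg : DifferentiableOn ℂ g (ball 0 1)) (hz₀ : z₀ ∈ ball (0 : ℂ) 1) :
    deriv f z₀ = (1 - ‖f z₀‖ ^ 2) / (1 - ‖z₀‖ ^ 2) * g z₀ := by
  have hq := one_sub_ofReal_norm_sq_ne_zero (mem_ball_zero_iff.1 hz₀)
  have hrec := h.one_sub_norm_sq_mul_iteratedDeriv_succ hf hg hz₀ 0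
  simp only [zero_add, iteratedDeriv_one, iteratedDeriv_zero, conj_mul'] at hrec
  field_simp
  linear_combination hrec

lemma IsHypQuotient.iteratedDeriv_two_eq (h : IsHypQuotient z₀ f g) (hf : Hclass f)
    (hg : DifferentiableOn ℂ g (ball 0 1)) (hz₀ : z₀ ∈ ball (0 : ℂ) 1) :
    iteratedDeriv 2 f z₀ = 2 * (1 - ‖f z₀‖ ^ 2) / (1 - ‖z₀‖ ^ 2) ^ 2 *
      ((1 - ‖z₀‖ ^ 2) * deriv g z₀ + (conj z₀ - conj (f z₀) * g z₀) * g z₀) := by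
  have hq := one_sub_ofReal_norm_sq_ne_zero (mem_ball_zero_iff.1 hz₀)
  have hf1 : DifferentiableAt ℂ f z₀ := hf.1.differentiableAt (isOpen_ball.mem_nhds hz₀)
  have hg1 : DifferentiableAt ℂ g z₀ := hg.differentiableAt (isOpen_ball.mem_nhds hz₀)
  have hrec := h.one_sub_norm_sq_mul_iteratedDeriv_succ hf hg hz₀ 1
  rw [iteratedDeriv_one, iteratedDeriv_one, deriv_sub_const,
    deriv_fun_mul hg1 (by fun_prop), deriv_const_sub, deriv_const_mul_field, conj_mul',
    h.deriv_eq hf hg hz₀] at hrec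
  field_simp at hrec ⊢
  push_cast at hrec
  linear_combination hrec

lemma IsHypQuotient.iteratedDeriv_three_eq (h : IsHypQuotient z₀ f g) (hf : Hclass f)
    (hg : DifferentiableOn ℂ g (ball 0 1)) (hz₀ : z₀ ∈ ball (0 : ℂ) 1) :
    iteratedDeriv 3 f z₀ = 3 / (1 - ‖z₀‖ ^ 2) * ((1 - ‖f z₀‖ ^ 2) * iteratedDeriv 2 g z₀ +
      (conj z₀ - conj (f z₀) * g z₀) * iteratedDeriv 2 f z₀ -
        2 * conj (f z₀) * deriv g z₀ * deriv f z₀) := by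
  have hq := one_sub_ofReal_norm_sq_ne_zero (mem_ball_zero_iff.1 hz₀)
  have hf2 : ContDiffAt ℂ 2 f z₀ := (hf.1.analyticAt (isOpen_ball.mem_nhds hz₀)).contDiffAt
  have hg2 : ContDiffAt ℂ 2 g z₀ := (hg.analyticAt (isOpen_ball.mem_nhds hz₀)).contDiffAt
  have hrec := h.one_sub_norm_sq_mul_iteratedDeriv_succ hf hg hz₀ 2
  have hone_sub : iteratedDeriv 2 (fun z => 1 - conj (f z₀) * f z) z₀ =
      -(conj (f z₀) * iteratedDeriv 2 f z₀) := by
    rw [iteratedDeriv_const_sub two_pos, iteratedDeriv_neg, iteratedDeriv_const_mul_field]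
  rw [iteratedDeriv_two_fun_mul hg2 (by fun_prop), iteratedDeriv_sub_const two_pos, hone_sub,
    deriv_const_sub, deriv_const_mul_field, conj_mul'] at hrec
  field_simp
  push_cast at hrec
  linear_combination hrec

lemma IsHypQuotient.H1_eq (h : IsHypQuotient z₀ f g) (hf : Hclass f)
    (hg : DifferentiableOn ℂ g (ball 0 1)) (hz₀ : z₀ ∈ ball (0 : ℂ) 1) : H1 f z₀ = g z₀ := by
  have hq := one_sub_ofReal_norm_sq_ne_zero (mem_ball_zero_iff.1 hz₀)
  have hp := one_sub_ofReal_norm_sq_ne_zero (mem_ball_zero_iff.1 (hf.2 hz₀))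
  rw [H1, h.deriv_eq hf hg hz₀]
  push_cast
  field_simp

lemma IsHypQuotient.D2_eq (h : IsHypQuotient z₀ f g) (hf : Hclass f)
    (hg : DifferentiableOn ℂ g (ball 0 1)) (hz₀ : z₀ ∈ ball (0 : ℂ) 1) :
    D2 f z₀ = 2 * ((1 - ‖z₀‖ ^ 2 : ℝ) * deriv g z₀) := by
  have hq := one_sub_ofReal_norm_sq_ne_zero (mem_ball_zero_iff.1 hz₀)
  have hp := one_sub_ofReal_norm_sq_ne_zero (mem_ball_zero_iff.1 (hf.2 hz₀))
  rw [D2, h.iteratedDeriv_two_eq hf hg hz₀, h.deriv_eq hf hg hz₀]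
  push_cast
  field_simp
  ring

lemma IsHypQuotient.H2_eq_H1 (h : IsHypQuotient z₀ f g) (hf : Hclass f)
    (hg : DifferentiableOn ℂ g (ball 0 1)) (hz₀ : z₀ ∈ ball (0 : ℂ) 1) : H2 f z₀ = H1 g z₀ := by
  rw [H2, h.D2_eq hf hg hz₀, h.H1_eq hf hg hz₀, H1, mul_div_mul_left _ _ two_ne_zero]

end HypQuotient

/-- The value of `f''(z₀)` forced by `f(z₀) = γ₀`, `H¹f(z₀) = γ₁` and `H²f(z₀) = γ₂`. -/
noncomputable def secondDerivValue (z₀ γ₀ γ₁ γ₂ : ℂ) : ℂ :=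
  2 * (1 - ‖γ₀‖ ^ 2) / (1 - ‖z₀‖ ^ 2) ^ 2 *
    ((1 - ‖γ₁‖ ^ 2) * γ₂ + (conj z₀ - conj γ₀ * γ₁) * γ₁)

/-- The center of the region of variability of `f'''(z₀)`: its value when the third Schur
parameter `l(z₀)` vanishes. -/
noncomputable def thirdDerivCenter (z₀ γ₀ γ₁ γ₂ : ℂ) : ℂ :=
  6 * (1 - ‖γ₀‖ ^ 2) / (1 - ‖z₀‖ ^ 2) ^ 3 *
    ((1 - ‖γ₁‖ ^ 2) * γ₂ * (2 * (conj z₀ - conj γ₀ * γ₁) - conj γ₁ * γ₂) +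
      (conj z₀ - conj γ₀ * γ₁) ^ 2 * γ₁)

/-- The radius of the region of variability of `f'''(z₀)`. -/
noncomputable def thirdDerivRadius (z₀ γ₀ γ₁ γ₂ : ℂ) : ℝ :=
  6 * (1 - ‖γ₀‖ ^ 2) * (1 - ‖γ₁‖ ^ 2) * (1 - ‖γ₂‖ ^ 2) / (1 - ‖z₀‖ ^ 2) ^ 3

section Variability

variable {z₀ γ₀ γ₁ γ₂ : ℂ} {f g k l : ℂ → ℂ}

lemma thirdDerivRadius_pos (hz₀ : ‖z₀‖ < 1) (hγ₀ : ‖γ₀‖ < 1) (hγ₁ : ‖γ₁‖ < 1) (hγ₂ : ‖γ₂‖ < 1) :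
    0 < thirdDerivRadius z₀ γ₀ γ₁ γ₂ := by
  have := one_sub_norm_sq_pos hz₀
  have := one_sub_norm_sq_pos hγ₀
  have := one_sub_norm_sq_pos hγ₁
  have := one_sub_norm_sq_pos hγ₂
  unfold thirdDerivRadius
  positivity

lemma IsHypQuotient.iteratedDeriv_two_eq_secondDerivValue (hfg : IsHypQuotient z₀ f g)
    (hgk : IsHypQuotient z₀ g k) (hf : Hclass f) (hg : Hclass g)
    (hk : DifferentiableOn ℂ k (ball 0 1)) (hz₀ : z₀ ∈ ball (0 : ℂ) 1) :
    iteratedDeriv 2 f z₀ = secondDerivValue z₀ (f z₀) (g z₀) (k z₀) := by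
  have hq := one_sub_ofReal_norm_sq_ne_zero (mem_ball_zero_iff.1 hz₀)
  rw [hfg.iteratedDeriv_two_eq hf hg.1 hz₀, hgk.deriv_eq hg hk hz₀, secondDerivValue]
  field_simp

lemma IsHypQuotient.iteratedDeriv_three_eq_affine (hfg : IsHypQuotient z₀ f g)
    (hgk : IsHypQuotient z₀ g k) (hkl : IsHypQuotient z₀ k l) (hf : Hclass f) (hg : Hclass g)
    (hk : Hclass k) (hl : DifferentiableOn ℂ l (ball 0 1)) (hz₀ : z₀ ∈ ball (0 : ℂ) 1) :
    iteratedDeriv 3 f z₀ = thirdDerivRadius z₀ (f z₀) (g z₀) (k z₀) * l z₀ +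
      thirdDerivCenter z₀ (f z₀) (g z₀) (k z₀) := by
  have hq := one_sub_ofReal_norm_sq_ne_zero (mem_ball_zero_iff.1 hz₀)
  rw [hfg.iteratedDeriv_three_eq hf hg.1 hz₀,
    hfg.iteratedDeriv_two_eq_secondDerivValue hgk hf hg hk.1 hz₀,
    hfg.deriv_eq hf hg.1 hz₀, hgk.iteratedDeriv_two_eq hg hk.1 hz₀,
    hgk.deriv_eq hg hk.1 hz₀, hkl.deriv_eq hk hl hz₀, secondDerivValue, thirdDerivRadius,
    thirdDerivCenter]
  push_cast
  field_simp
  ring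

lemma Hclass.exists_isHypQuotient_hclass (hf : Hclass f) (hz₀ : z₀ ∈ ball (0 : ℂ) 1)
    (hH1 : ‖H1 f z₀‖ < 1) : ∃ g, Hclass g ∧ IsHypQuotient z₀ f g ∧ g z₀ = H1 f z₀ := by
  obtain ⟨g, hg, hfg⟩ := hf.exists_isHypQuotient hz₀
  have hvalue : g z₀ = H1 f z₀ := (hfg.H1_eq hf hg.1 hz₀).symm
  exact ⟨g, hg.hclass_of_norm_lt_one hz₀ (hvalue ▸ hH1), hfg, hvalue⟩

lemma Hclass.iteratedDeriv_two_eq_secondDerivValue (hf : Hclass f) (hz₀ : z₀ ∈ ball (0 : ℂ) 1)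
    (hH1 : ‖H1 f z₀‖ < 1) :
    iteratedDeriv 2 f z₀ = secondDerivValue z₀ (f z₀) (H1 f z₀) (H2 f z₀) := by
  obtain ⟨g, hg, hfg, hg_value⟩ := hf.exists_isHypQuotient_hclass hz₀ hH1
  obtain ⟨k, hk, hgk⟩ := hg.exists_isHypQuotient hz₀
  rw [hfg.iteratedDeriv_two_eq_secondDerivValue hgk hf hg hk.1 hz₀, hg_value,
    hfg.H2_eq_H1 hf hg.1 hz₀, hgk.H1_eq hg hk.1 hz₀]

lemma Hclass.exists_iteratedDeriv_three_eq (hf : Hclass f) (hz₀ : z₀ ∈ ball (0 : ℂ) 1)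
    (hH1 : ‖H1 f z₀‖ < 1) (hH2 : ‖H2 f z₀‖ < 1) :
    ∃ t ∈ closedBall (0 : ℂ) 1, iteratedDeriv 3 f z₀ =
      thirdDerivRadius z₀ (f z₀) (H1 f z₀) (H2 f z₀) * t +
        thirdDerivCenter z₀ (f z₀) (H1 f z₀) (H2 f z₀) := by
  obtain ⟨g, hg, hfg, hg_value⟩ := hf.exists_isHypQuotient_hclass hz₀ hH1
  have hH2_eq : H2 f z₀ = H1 g z₀ := hfg.H2_eq_H1 hf hg.1 hz₀
  obtain ⟨k, hk, hgk, hk_value⟩ := hg.exists_isHypQuotient_hclass hz₀ (hH2_eq ▸ hH2)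
  obtain ⟨l, hl, hkl⟩ := hk.exists_isHypQuotient hz₀
  refine ⟨l z₀, hl.2 hz₀, ?_⟩
  rw [hfg.iteratedDeriv_three_eq_affine hgk hkl hf hg hk hl.1 hz₀, hg_value, hk_value, hH2_eq]

lemma exists_hclass_iteratedDeriv_three_eq (hz₀ : z₀ ∈ ball (0 : ℂ) 1) (hγ₀ : ‖γ₀‖ < 1)
    (hγ₁ : ‖γ₁‖ < 1) (hγ₂ : ‖γ₂‖ < 1) {t : ℂ} (ht : ‖t‖ ≤ 1) :
    ∃ f, Hclass f ∧ f z₀ = γ₀ ∧ H1 f z₀ = γ₁ ∧ H2 f z₀ = γ₂ ∧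
      iteratedDeriv 3 f z₀ =
        thirdDerivRadius z₀ γ₀ γ₁ γ₂ * t + thirdDerivCenter z₀ γ₀ γ₁ γ₂ := by
  obtain ⟨k, hk, rfl, hkl⟩ := (schurClass_const ht).exists_hclass_isHypQuotient hz₀ hγ₂
  obtain ⟨g, hg, rfl, hgk⟩ := hk.schurClass.exists_hclass_isHypQuotient hz₀ hγ₁
  obtain ⟨f, hf, rfl, hfg⟩ := hg.schurClass.exists_hclass_isHypQuotient hz₀ hγ₀
  refine ⟨f, hf, rfl, hfg.H1_eq hf hg.1 hz₀, ?_,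
    hfg.iteratedDeriv_three_eq_affine hgk hkl hf hg hk (differentiableOn_const t) hz₀⟩
  rw [hfg.H2_eq_H1 hf hg.1 hz₀, hgk.H1_eq hg hk.1 hz₀]

theorem setOf_iteratedDeriv_three_eq_closedBall (hz₀ : z₀ ∈ ball (0 : ℂ) 1) (hγ₀ : ‖γ₀‖ < 1)
    (hγ₁ : ‖γ₁‖ < 1) (hγ₂ : ‖γ₂‖ < 1) :
    {w : ℂ | ∃ f, Hclass f ∧ f z₀ = γ₀ ∧ H1 f z₀ = γ₁ ∧ H2 f z₀ = γ₂ ∧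
        iteratedDeriv 3 f z₀ = w} =
      closedBall (thirdDerivCenter z₀ γ₀ γ₁ γ₂) (thirdDerivRadius z₀ γ₀ γ₁ γ₂) := by
  have hradius := thirdDerivRadius_pos (mem_ball_zero_iff.1 hz₀) hγ₀ hγ₁ hγ₂
  have himage := image_mul_add_closedBall (ofReal_ne_zero.2 hradius.ne')
    (thirdDerivCenter z₀ γ₀ γ₁ γ₂) 0 1
  rw [mul_zero, zero_add, mul_one, norm_real, Real.norm_of_nonneg hradius.le] at himage
  rw [← himage]
  ext w
  constructor
  · rintro ⟨f, hf, rfl, rfl, rfl, rfl⟩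
    obtain ⟨t, ht, hw⟩ := hf.exists_iteratedDeriv_three_eq hz₀ hγ₁ hγ₂
    exact ⟨t, ht, hw.symm⟩
  · rintro ⟨t, ht, rfl⟩
    exact exists_hclass_iteratedDeriv_three_eq hz₀ hγ₀ hγ₁ hγ₂ (mem_closedBall_zero_iff.1 ht)

lemma Hclass.iteratedDeriv_three_of_eqOn_id_mul {h : ℂ → ℂ} (hf : Hclass f)
    (hz₀ : z₀ ∈ ball (0 : ℂ) 1) (hH1 : ‖H1 f z₀‖ < 1)
    (hmul : Set.EqOn h (fun z => z * f z) (ball 0 1)) :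
    iteratedDeriv 3 h z₀ =
      z₀ * iteratedDeriv 3 f z₀ + 3 * secondDerivValue z₀ (f z₀) (H1 f z₀) (H2 f z₀) := by
  have hleibniz := iteratedDeriv_succ_affine_mul 0 1 (n := 2)
    (hf.1.analyticAt (isOpen_ball.mem_nhds hz₀)).contDiffAt
  simp only [zero_add, one_mul] at hleibniz
  rw [hmul.iteratedDeriv_of_isOpen isOpen_ball 3 hz₀, hleibniz,
    hf.iteratedDeriv_two_eq_secondDerivValue hz₀ hH1]
  push_cast
  ring

end Variability

/-- Dieudonné's Lemma of the third derivative: with `γ₀ = w₀/z₀`, the variability region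
of `h'''(z₀)` over all `h ∈ ℋ` with `h(0) = 0` whose analytic quotient `f(z) = h(z)/z`
satisfies `f(z₀) = γ₀`, `H¹f(z₀) = γ₁`, `H²f(z₀) = γ₂` is a closed disk of radius
`|z₀|·6(1-|γ₀|²)(1-|γ₁|²)(1-|γ₂|²)/(1-|z₀|²)³`. -/
theorem dieudonne_third_variability (z₀ w₀ γ₀ γ₁ γ₂ : ℂ)
    (hz₀ : z₀ ∈ ball (0 : ℂ) 1) (hw₀ : w₀ ∈ ball (0 : ℂ) 1)
    (hlt : ‖w₀‖ < ‖z₀‖) (hγ₀ : γ₀ = w₀ / z₀)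
    (hγ₁ : γ₁ ∈ ball (0 : ℂ) 1) (hγ₂ : γ₂ ∈ ball (0 : ℂ) 1) :
    ∃ c : ℂ,
      {w : ℂ | ∃ h f : ℂ → ℂ, Hclass h ∧ h 0 = 0 ∧
          DifferentiableOn ℂ f (ball (0 : ℂ) 1) ∧
          (∀ z ∈ ball (0 : ℂ) 1, z ≠ 0 → f z = h z / z) ∧
          f z₀ = γ₀ ∧ H1 f z₀ = γ₁ ∧ H2 f z₀ = γ₂ ∧
          iteratedDeriv 3 h z₀ = w} =
        closedBall c
          (‖z₀‖ * (6 * (1 - ‖γ₀‖ ^ 2) * (1 - ‖γ₁‖ ^ 2) * (1 - ‖γ₂‖ ^ 2) /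
            (1 - ‖z₀‖ ^ 2) ^ 3)) := by
  have hz₀_pos : 0 < ‖z₀‖ := (norm_nonneg w₀).trans_lt hlt
  have hγ₀_lt : ‖γ₀‖ < 1 := by rwa [hγ₀, norm_div, div_lt_one hz₀_pos]
  rw [mem_ball_zero_iff] at hγ₁ hγ₂
  refine ⟨z₀ * thirdDerivCenter z₀ γ₀ γ₁ γ₂ + 3 * secondDerivValue z₀ γ₀ γ₁ γ₂, ?_⟩
  change _ = closedBall _ (‖z₀‖ * thirdDerivRadius z₀ γ₀ γ₁ γ₂)
  rw [← image_mul_add_closedBall (norm_pos_iff.1 hz₀_pos),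
    ← setOf_iteratedDeriv_three_eq_closedBall hz₀ hγ₀_lt hγ₁ hγ₂]
  ext w
  constructor
  · rintro ⟨h, f, hh, h_zero, hfd, hfh, rfl, rfl, rfl, rfl⟩
    have hf : Hclass f := hh.schurClass.hclass_of_eq_div h_zero hfd hfh hz₀ hγ₀_lt
    exact ⟨_, ⟨f, hf, rfl, rfl, rfl, rfl⟩,
      (hf.iteratedDeriv_three_of_eqOn_id_mul hz₀ hγ₁ (eqOn_id_mul_of_eq_div h_zero hfh)).symm⟩
  · rintro ⟨_, ⟨f, hf, rfl, rfl, rfl, rfl⟩, rfl⟩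
    exact ⟨fun z => z * f z, f, hclass_id.mul_schurClass hf.schurClass, zero_mul _, hf.1,
      fun z _ hz => (mul_div_cancel_left₀ _ hz).symm, rfl, rfl, rfl,
      hf.iteratedDeriv_three_of_eqOn_id_mul hz₀ hγ₁ (Set.eqOn_refl _ _)⟩
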